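/- Let n ≥ 1 and let K ⊂ ℝⁿ be a convex body containing the origin in its interior. Then the function F_K(x,ξ) = vp((K°+ξ)° + x) is (defined on a neighborhood of (0,0) in ℝⁿ × ℝⁿ and) differentiable at (0,0), with differential d_{(0,0)}F_K(v,η) = −(n+1)·vp(K)·(⟨G_{K°}, v⟩ + ⟨G_K, η⟩) for all (v,η) ∈ ℝⁿ × ℝⁿ. -/

import Mathlib

open MeasureTheory RealInnerProductSpace

noncomputable section

/-- The polar body `K° = {y | ⟨x, y⟩ ≤ 1 for all x ∈ K}`. -/
def polarBody {n : ℕ} (K : Set (EuclideanSpace ℝ (Fin n))) : Set (EuclideanSpace ℝ (Fin n)) :=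
  {y | ∀ x ∈ K, ⟪x, y⟫ ≤ 1}

/-- The volume product `vp(K) = |K| · |K°|`. -/
def vp {n : ℕ} (K : Set (EuclideanSpace ℝ (Fin n))) : ℝ :=
  (volume K).toReal * (volume (polarBody K)).toReal

/-- The barycenter `G_A = |A|⁻¹ ∫_A x dx`. -/
def bary {n : ℕ} (A : Set (EuclideanSpace ℝ (Fin n))) : EuclideanSpace ℝ (Fin n) :=
  (volume A).toReal⁻¹ • ∫ x in A, x

/-- The covariance matrix `cov(K)_{ij} = |K|⁻¹ ∫_K x_i x_j dx`. -/
def covM {n : ℕ} (K : Set (EuclideanSpace ℝ (Fin n))) : Matrix (Fin n) (Fin n) ℝ :=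
  Matrix.of fun i j => (volume K).toReal⁻¹ * ∫ x in K, x i * x j

/-- The functional `F_K(x, ξ) = vp((K° + ξ)° + x)`. -/
def FK {n : ℕ} (K : Set (EuclideanSpace ℝ (Fin n)))
    (p : EuclideanSpace ℝ (Fin n) × EuclideanSpace ℝ (Fin n)) : ℝ :=
  vp ((fun y => y + p.1) '' polarBody ((fun y => y + p.2) '' polarBody K))

/-!
Translating a set `A` by `x` changes its polar by the projective map `w ↦ w / (1 + ⟪x, w⟫)`, whose
Jacobian determinant is `(1 + ⟪x, w⟫) ^ (-(n + 1))`. Changing variables, and using `K°° = K` and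
`((K° + ξ)°)° = K° + ξ`, both volumes in `F_K` become integrals over bodies that do not move:
`F_K(x, ξ) = ∫_K (1 + ⟪ξ, w⟫) ^ (-(n + 1)) dw * ∫_{K°} (1 + ⟪x, w + ξ⟫) ^ (-(n + 1)) dw`.
Differentiating under the integral signs at the origin produces the factor `-(n + 1)` and the first
moments of `K` and `K°`.
-/

open Set Filter Topology

section ParametricIntegral

variable {H X G : Type*} [NormedAddCommGroup H] [NormedSpace ℝ H] [NormedAddCommGroup X]
  [NormedSpace ℝ X] [NormedAddCommGroup G] [NormedSpace ℝ G] {F : H → X → G} {x₀ : H} {a : X}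

theorem continuousAt_fderiv_left_of_contDiffAt_uncurry
    (hF : ContDiffAt ℝ 1 (Function.uncurry F) (x₀, a)) :
    ContinuousAt (fun z : H × X => fderiv ℝ (F · z.2) z.1) (x₀, a) := by
  have hF' : ContDiffAt ℝ 1 (Function.uncurry fun (z : H × X) x => F x z.2) ((x₀, a), x₀) :=
    hF.comp ((x₀, a), x₀) (f := fun q : (H × X) × H => (q.2, q.1.2)) (by fun_prop)
  exact (hF'.fderiv (m := 0) (g := Prod.fst) contDiffAt_fst (by norm_num)).continuousAt

theorem eventually_differentiableAt_left_of_contDiffAt_uncurry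
    (hF : ContDiffAt ℝ 1 (Function.uncurry F) (x₀, a)) :
    ∀ᶠ z : H × X in 𝓝 (x₀, a), DifferentiableAt ℝ (F · z.2) z.1 := by
  filter_upwards [hF.eventually (by simp)] with z hz
  exact (hz.differentiableAt (by simp)).comp z.1 (f := fun x => (x, z.2)) (by fun_prop)

theorem hasFDerivAt_setIntegral_of_contDiffAt_uncurry [MeasurableSpace X] [OpensMeasurableSpace X]
    {μ : Measure X} [IsFiniteMeasureOnCompacts μ] {k : Set X} (hk : IsCompact k)
    (hF : ∀ a ∈ k, ContDiffAt ℝ 1 (Function.uncurry F) (x₀, a)) :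
    HasFDerivAt (fun x => ∫ a in k, F x a ∂μ) (∫ a in k, fderiv ℝ (F · a) x₀ ∂μ) x₀ := by
  have hslice (a : X) (x : H) : ContinuousAt (fun b : X => (x, b)) a := by fun_prop
  have hF_cont : ∀ᶠ x in 𝓝 x₀, ContinuousOn (F x) k := by
    have hcont_uncurry := hk.eventually_forall_of_forall_eventually (x₀ := x₀)
      (P := fun x b => ContinuousAt (Function.uncurry F) (x, b))
      fun a ha => ((hF a ha).eventually (by simp)).mono fun z hz => hz.continuousAt
    filter_upwards [hcont_uncurry] with x hx a ha
    exact ((hx a ha).comp (hslice a x)).continuousWithinAt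
  have hF'_cont : ContinuousOn (fun a => fderiv ℝ (F · a) x₀) k := fun a ha =>
    ((continuousAt_fderiv_left_of_contDiffAt_uncurry (hF a ha)).comp
      (hslice a x₀)).continuousWithinAt
  obtain ⟨C, hC⟩ := hk.exists_bound_of_continuousOn hF'_cont
  have hbound : ∀ᶠ x in 𝓝 x₀, ∀ a ∈ k, ‖fderiv ℝ (F · a) x‖ < C + 1 :=
    hk.eventually_forall_of_forall_eventually fun a ha =>
      (continuousAt_fderiv_left_of_contDiffAt_uncurry (hF a ha)).norm.eventually_lt_const
        ((hC a ha).trans_lt (lt_add_one C))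
  have hdiff : ∀ᶠ x in 𝓝 x₀, ∀ a ∈ k, DifferentiableAt ℝ (F · a) x :=
    hk.eventually_forall_of_forall_eventually fun a ha =>
      eventually_differentiableAt_left_of_contDiffAt_uncurry (hF a ha)
  refine hasFDerivAt_integral_of_dominated_of_fderiv_le (bound := fun _ => C + 1)
    (hbound.and hdiff)
    (hF_cont.mono fun x hx => hx.aestronglyMeasurable_of_isCompact hk hk.measurableSet)
    (hF_cont.self_of_nhds.integrableOn_compact hk)
    (hF'_cont.aestronglyMeasurable_of_isCompact hk hk.measurableSet) ?_
    (integrableOn_const hk.measure_ne_top)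
    (ae_restrict_of_forall_mem hk.measurableSet fun a ha x hx => (hx.2 a ha).hasFDerivAt)
  exact ae_restrict_of_forall_mem hk.measurableSet fun a ha x hx => (hx.1 a ha).le

end ParametricIntegral

section InnerProductSpace

variable {E : Type*} [NormedAddCommGroup E] [InnerProductSpace ℝ E]

theorem hasFDerivAt_inv_one_add_inner_add_pow (m : ℕ) (w : E) :
    HasFDerivAt (fun p : E × E => ((1 + ⟪p.1, w + p.2⟫) ^ m)⁻¹)
      (-(m : ℝ) • (innerSL ℝ w).comp (ContinuousLinearMap.fst ℝ E E)) (0, 0) := by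
  have hinner : HasFDerivAt (fun p : E × E => 1 + ⟪p.1, w + p.2⟫)
      ((innerSL ℝ w).comp (ContinuousLinearMap.fst ℝ E E)) (0, 0) := by
    refine ((hasFDerivAt_fst.inner ℝ (hasFDerivAt_snd.const_add w)).const_add 1).congr_fderiv ?_
    ext v <;> simp [real_inner_comm]
  refine ((hasDerivAt_inv (by simp)).comp_hasFDerivAt (0, 0) (hinner.pow m)).congr_fderiv ?_
  ext v <;> simp

variable [CompleteSpace E] [MeasurableSpace E] [OpensMeasurableSpace E] {μ : Measure E}
  [IsFiniteMeasureOnCompacts μ] {A : Set E}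

theorem hasFDerivAt_setIntegral_inv_one_add_inner_add_pow
    (hA : IsCompact A) (m : ℕ) :
    HasFDerivAt (fun p : E × E => ∫ w in A, ((1 + ⟪p.1, w + p.2⟫) ^ m)⁻¹ ∂μ)
      (-(m : ℝ) • (innerSL ℝ (∫ w in A, w ∂μ)).comp (ContinuousLinearMap.fst ℝ E E)) (0, 0) := by
  have hcontDiff (w : E) : ContDiffAt ℝ 1
      (Function.uncurry fun (p : E × E) w => ((1 + ⟪p.1, w + p.2⟫) ^ m)⁻¹) ((0, 0), w) := by
    have hinner : ContDiff ℝ 1 fun q : (E × E) × E => ⟪q.1.1, q.2 + q.1.2⟫ :=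
      ContDiff.inner ℝ (by fun_prop) (by fun_prop)
    exact ((contDiff_const.add hinner).pow m).contDiffAt.inv (by simp)
  refine (hasFDerivAt_setIntegral_of_contDiffAt_uncurry hA fun w _ => hcontDiff w).congr_fderiv ?_
  simp only [(hasFDerivAt_inv_one_add_inner_add_pow m _).fderiv]
  rw [integral_smul]
  congr 1
  exact ((ContinuousLinearMap.compL ℝ (E × E) E ℝ).flip
    (ContinuousLinearMap.fst ℝ E E) ∘L innerSL ℝ).integral_comp_comm
      (continuous_id.continuousOn.integrableOn_compact hA)

theorem hasFDerivAt_setIntegral_inv_one_add_inner_pow (hA : IsCompact A) (m : ℕ) :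
    HasFDerivAt (fun ξ : E => ∫ w in A, ((1 + ⟪ξ, w⟫) ^ m)⁻¹ ∂μ)
      (-(m : ℝ) • innerSL ℝ (∫ w in A, w ∂μ)) 0 := by
  have hcomp := (hasFDerivAt_setIntegral_inv_one_add_inner_add_pow (μ := μ) hA m).comp 0
    (f := fun ξ : E => (ξ, (0 : E))) (hasFDerivAt_prodMk_left 0 0)
  simp only [Function.comp_def, add_zero] at hcomp
  exact hcomp

end InnerProductSpace

section ProjectiveMap

variable {E : Type*} [NormedAddCommGroup E] [InnerProductSpace ℝ E] {x w : E}

/-- The projective transformation `w ↦ w / (1 + ⟪x, w⟫)`, through which translation by `x` acts on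
polar bodies; it takes the junk value `0` on the hyperplane `1 + ⟪x, w⟫ = 0`. -/
def projectiveMap (x w : E) : E := (1 + ⟪x, w⟫)⁻¹ • w

theorem projectiveMap_neg_projectiveMap (h : 1 + ⟪x, w⟫ ≠ 0) :
    projectiveMap (-x) (projectiveMap x w) = w := by
  have hdenom : 1 + ⟪-x, (1 + ⟪x, w⟫)⁻¹ • w⟫ = (1 + ⟪x, w⟫)⁻¹ := by
    rw [inner_neg_left, real_inner_smul_right]
    field_simp
    ring
  rw [projectiveMap, projectiveMap, hdenom, inv_inv, smul_inv_smul₀ h]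

theorem hasFDerivAt_projectiveMap (h : 1 + ⟪x, w⟫ ≠ 0) :
    HasFDerivAt (projectiveMap x)
      ((1 + ⟪x, w⟫)⁻¹ • (ContinuousLinearMap.id ℝ E +
        (-(1 + ⟪x, w⟫)⁻¹ • innerSL ℝ x).smulRight w)) w := by
  have hdenom : HasFDerivAt (fun w => 1 + ⟪x, w⟫) (innerSL ℝ x) w :=
    (innerSL ℝ x).hasFDerivAt.const_add 1
  refine (((hasDerivAt_inv h).comp_hasFDerivAt w hdenom).smul (hasFDerivAt_id w)).congr_fderiv ?_
  ext v
  simp [smul_smul, sq, mul_assoc]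

theorem det_fderiv_projectiveMap [FiniteDimensional ℝ E] (h : 1 + ⟪x, w⟫ ≠ 0) :
    (fderiv ℝ (projectiveMap x) w).det = ((1 + ⟪x, w⟫) ^ (Module.finrank ℝ E + 1))⁻¹ := by
  have htransvection : (fderiv ℝ (projectiveMap x) w : E →ₗ[ℝ] E) = (1 + ⟪x, w⟫)⁻¹ •
      LinearMap.transvection (-(1 + ⟪x, w⟫)⁻¹ • (innerSL ℝ x : E →ₗ[ℝ] ℝ)) w := by
    rw [(hasFDerivAt_projectiveMap h).fderiv]
    ext v
    simp [LinearMap.transvection.apply]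
  have hdet : 1 + (-(1 + ⟪x, w⟫)⁻¹ • (innerSL ℝ x : E →ₗ[ℝ] ℝ)) w = (1 + ⟪x, w⟫)⁻¹ := by
    simp only [LinearMap.smul_apply, ContinuousLinearMap.coe_coe, innerSL_apply_apply, smul_eq_mul]
    field_simp
    ring
  rw [ContinuousLinearMap.det, htransvection, LinearMap.det_smul, LinearMap.transvection.det, hdet,
    ← pow_succ, inv_pow]

end ProjectiveMap

section PolarBody

variable {n : ℕ} {A : Set (EuclideanSpace ℝ (Fin n))} {x y : EuclideanSpace ℝ (Fin n)}

theorem isClosed_polarBody (A : Set (EuclideanSpace ℝ (Fin n))) : IsClosed (polarBody A) := by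
  simp only [polarBody, ofPred_forall]
  exact isClosed_biInter fun x _ => isClosed_le (by fun_prop) continuous_const

theorem convex_polarBody (A : Set (EuclideanSpace ℝ (Fin n))) : Convex ℝ (polarBody A) := by
  simp only [polarBody, ofPred_forall]
  exact convex_iInter₂ fun x _ => convex_halfSpace_le (innerSL ℝ x).toLinearMap.isLinear 1

theorem polarBody_polarBody (hclosed : IsClosed A) (hconv : Convex ℝ A) (h0 : 0 ∈ A) :
    polarBody (polarBody A) = A := by
  refine Subset.antisymm (fun y hy => ?_) fun x hx y hy => real_inner_comm x y ▸ hy x hx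
  by_contra hyA
  obtain ⟨f, u, hf, hu⟩ := geometric_hahn_banach_closed_point hconv hclosed hyA
  have hu0 : 0 < u := by simpa using hf 0 h0
  obtain ⟨z, rfl⟩ := (InnerProductSpace.toDual ℝ (EuclideanSpace ℝ (Fin n))).surjective f
  simp only [InnerProductSpace.toDual_apply_apply] at hf hu
  have hz : u⁻¹ • z ∈ polarBody A := fun x hx => by
    rw [real_inner_smul_right, real_inner_comm, inv_mul_le_one₀ hu0]
    exact (hf x hx).le
  have hzy := hy _ hz
  rw [real_inner_smul_left, inv_mul_le_one₀ hu0] at hzy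
  exact hzy.not_gt hu

theorem inner_lt_one_of_mem_interior (hx : x ∈ interior A) (hy : y ∈ polarBody A) :
    ⟪x, y⟫ < 1 := by
  have hscale : ∀ᶠ t : ℝ in 𝓝 1, t • x ∈ A :=
    (show ContinuousAt (fun t : ℝ => t • x) 1 by fun_prop).eventually_mem
      (by rwa [one_smul, ← mem_interior_iff_mem_nhds])
  have hscale_gt : ∀ᶠ t : ℝ in 𝓝[>] 1, t • x ∈ A ∧ 1 < t :=
    (hscale.filter_mono nhdsWithin_le_nhds).and self_mem_nhdsWithin
  obtain ⟨t, htA, ht⟩ := hscale_gt.exists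
  have hty : t * ⟪x, y⟫ ≤ 1 := real_inner_smul_left x y t ▸ hy _ htA
  by_contra! hxy
  nlinarith

theorem one_add_inner_pos_of_neg_mem_interior (hx : -x ∈ interior A) (hy : y ∈ polarBody A) :
    0 < 1 + ⟪x, y⟫ := by
  have hlt := inner_lt_one_of_mem_interior hx hy
  rw [inner_neg_left] at hlt
  linarith

theorem mem_interior_polarBody (hA : IsCompact A) (h : ∀ x ∈ A, ⟪x, y⟫ < 1) :
    y ∈ interior (polarBody A) := by
  have hnear : ∀ᶠ z in 𝓝 y, ∀ x ∈ A, ⟪x, z⟫ < 1 :=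
    hA.eventually_forall_of_forall_eventually fun x hx =>
      ContinuousAt.eventually_lt (by fun_prop) continuousAt_const (h x hx)
  exact mem_interior_iff_mem_nhds.2 (hnear.mono fun z hz x hx => (hz x hx).le)

theorem zero_mem_interior_polarBody (hA : IsCompact A) : 0 ∈ interior (polarBody A) :=
  mem_interior_polarBody hA fun x _ => by simp

theorem isCompact_polarBody (h0 : 0 ∈ interior A) : IsCompact (polarBody A) := by
  obtain ⟨r, hr, hrA⟩ := Metric.nhds_basis_closedBall.mem_iff.1 (mem_interior_iff_mem_nhds.1 h0)
  refine (isCompact_closedBall 0 r⁻¹).of_isClosed_subset (isClosed_polarBody A) fun y hy => ?_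
  have hmem : (r * ‖y‖⁻¹) • y ∈ A := hrA <| by
    rw [mem_closedBall_zero_iff, norm_smul, norm_mul, norm_inv, norm_norm,
      Real.norm_of_nonneg hr.le, mul_assoc]
    exact mul_le_of_le_one_right hr.le inv_mul_le_one
  have hinner : ⟪(r * ‖y‖⁻¹) • y, y⟫ = r * ‖y‖ := by
    rw [real_inner_smul_left, real_inner_self_eq_norm_sq, sq, mul_assoc, ← mul_assoc ‖y‖⁻¹]
    rcases eq_or_ne ‖y‖ 0 with h | h <;> simp [h]
  rw [mem_closedBall_zero_iff, ← one_div, le_div_iff₀' hr, ← hinner]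
  exact hy _ hmem

theorem mapsTo_projectiveMap_polarBody (h : ∀ w ∈ polarBody A, 0 < 1 + ⟪x, w⟫) :
    MapsTo (projectiveMap x) (polarBody A) (polarBody ((fun y => y + x) '' A)) := by
  rintro w hw _ ⟨z, hz, rfl⟩
  rw [projectiveMap, real_inner_smul_right, inv_mul_le_one₀ (h w hw), inner_add_left]
  linarith [hw z hz]

theorem bijOn_projectiveMap_polarBody (h0 : 0 ∈ interior A) (hx : -x ∈ interior A) :
    BijOn (projectiveMap x) (polarBody A) (polarBody ((fun y => y + x) '' A)) := by
  have hpos : ∀ w ∈ polarBody A, 0 < 1 + ⟪x, w⟫ := fun w => one_add_inner_pos_of_neg_mem_interior hx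
  have hx' : - -x ∈ interior ((fun y => y + x) '' A) := by
    have himage := (Homeomorph.addRight x).image_interior A
    simp only [Homeomorph.coe_addRight] at himage
    exact himage ▸ ⟨0, h0, by simp⟩
  have hneg : ∀ y ∈ polarBody ((fun y => y + x) '' A), 0 < 1 + ⟪-x, y⟫ := fun y =>
    one_add_inner_pos_of_neg_mem_interior hx'
  have hback := mapsTo_projectiveMap_polarBody hneg
  simp only [image_image, add_neg_cancel_right, image_id'] at hback
  refine InvOn.bijOn ⟨fun w hw => projectiveMap_neg_projectiveMap (hpos w hw).ne', fun y hy => ?_⟩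
    (mapsTo_projectiveMap_polarBody hpos) hback
  simpa using projectiveMap_neg_projectiveMap (hneg y hy).ne'

theorem volume_polarBody_translate (h0 : 0 ∈ interior A) (hx : -x ∈ interior A) :
    (volume (polarBody ((fun y => y + x) '' A))).toReal =
      ∫ w in polarBody A, ((1 + ⟪x, w⟫) ^ (n + 1))⁻¹ := by
  have hpos : ∀ w ∈ polarBody A, 0 < 1 + ⟪x, w⟫ := fun w => one_add_inner_pos_of_neg_mem_interior hx
  have hbij := bijOn_projectiveMap_polarBody h0 hx
  have hmeas := (isClosed_polarBody A).measurableSet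
  calc (volume (polarBody ((fun y => y + x) '' A))).toReal
      = ∫ _ in projectiveMap x '' polarBody A, (1 : ℝ) := by
        rw [hbij.image_eq, setIntegral_const, smul_eq_mul, mul_one, Measure.real]
    _ = ∫ w in polarBody A, |(fderiv ℝ (projectiveMap x) w).det| • (1 : ℝ) :=
        integral_image_eq_integral_abs_det_fderiv_smul volume hmeas
          (fun w hw => (hasFDerivAt_projectiveMap
            (hpos w hw).ne').differentiableAt.hasFDerivAt.hasFDerivWithinAt) hbij.injOn _
    _ = ∫ w in polarBody A, ((1 + ⟪x, w⟫) ^ (n + 1))⁻¹ :=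
        setIntegral_congr_fun hmeas fun w hw => by
          have hw_pos := hpos w hw
          simp only [smul_eq_mul, mul_one]
          rw [det_fderiv_projectiveMap hw_pos.ne', finrank_euclideanSpace_fin,
            abs_of_pos (by positivity)]

end PolarBody

section VolumeProduct

variable {n : ℕ} {K : Set (EuclideanSpace ℝ (Fin n))}

theorem toReal_volume_smul_bary (hK : volume K ≠ ⊤) :
    (volume K).toReal • bary K = ∫ w in K, w := by
  rw [bary, ← Measure.real, ← setAverage_eq, measure_smul_setAverage _ hK]

theorem FK_eq_setIntegral_mul_setIntegral (hKcomp : IsCompact K) (hKconv : Convex ℝ K)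
    (hK0 : 0 ∈ interior K) {x ξ : EuclideanSpace ℝ (Fin n)} (hξ : -ξ ∈ interior (polarBody K))
    (hx : -x ∈ interior (polarBody ((fun y => y + ξ) '' polarBody K))) :
    FK K (x, ξ) = (∫ w in K, ((1 + ⟪ξ, w⟫) ^ (n + 1))⁻¹) *
      ∫ w in polarBody K, ((1 + ⟪x, w + ξ⟫) ^ (n + 1))⁻¹ := by
  set M := (fun y => y + ξ) '' polarBody K
  have hM : IsCompact M := (isCompact_polarBody hK0).image (by fun_prop)
  have hMconv : Convex ℝ M := by
    simpa only [M, add_comm] using (convex_polarBody K).translate ξ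
  have hM0 : 0 ∈ M := ⟨-ξ, interior_subset hξ, neg_add_cancel ξ⟩
  have hvol : (volume (polarBody M)).toReal = ∫ w in K, ((1 + ⟪ξ, w⟫) ^ (n + 1))⁻¹ := by
    rw [volume_polarBody_translate (zero_mem_interior_polarBody hKcomp) hξ,
      polarBody_polarBody hKcomp.isClosed hKconv (interior_subset hK0)]
  have hvol_polar : (volume (polarBody ((fun y => y + x) '' polarBody M))).toReal =
      ∫ w in polarBody K, ((1 + ⟪x, w + ξ⟫) ^ (n + 1))⁻¹ := by
    rw [volume_polarBody_translate (zero_mem_interior_polarBody hM) hx,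
      polarBody_polarBody hM.isClosed hMconv hM0]
    exact (measurePreserving_add_right volume ξ).setIntegral_image_emb
      (measurableEmbedding_addRight ξ) _ _
  rw [← hvol, ← hvol_polar, FK, vp, image_add_right, measure_preimage_add_right]

theorem eventually_FK_eq_setIntegral_mul_setIntegral (hKcomp : IsCompact K) (hKconv : Convex ℝ K)
    (hK0 : 0 ∈ interior K) :
    ∀ᶠ p in 𝓝 (0, 0), FK K p = (∫ w in K, ((1 + ⟪p.2, w⟫) ^ (n + 1))⁻¹) *
      ∫ w in polarBody K, ((1 + ⟪p.1, w + p.2⟫) ^ (n + 1))⁻¹ := by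
  have hcomp := isCompact_polarBody hK0
  have hξ : ∀ᶠ p : EuclideanSpace ℝ (Fin n) × EuclideanSpace ℝ (Fin n) in 𝓝 (0, 0),
      -p.2 ∈ interior (polarBody K) :=
    ContinuousAt.eventually_mem (by fun_prop)
      (isOpen_interior.mem_nhds (by simpa using zero_mem_interior_polarBody hKcomp))
  have hx : ∀ᶠ p : EuclideanSpace ℝ (Fin n) × EuclideanSpace ℝ (Fin n) in 𝓝 (0, 0),
      ∀ w ∈ polarBody K, ⟪w + p.2, -p.1⟫ < 1 :=
    hcomp.eventually_forall_of_forall_eventually fun w _ =>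
      ContinuousAt.eventually_lt (by fun_prop) continuousAt_const (by simp)
  filter_upwards [hξ, hx] with ⟨x, ξ⟩ hξ hx
  exact FK_eq_setIntegral_mul_setIntegral hKcomp hKconv hK0 hξ
    (mem_interior_polarBody (hcomp.image (by fun_prop)) (forall_mem_image.2 hx))

theorem hasFDerivAt_FK (hKcomp : IsCompact K) (hKconv : Convex ℝ K) (hK0 : 0 ∈ interior K) :
    HasFDerivAt (FK K) ((-((n : ℝ) + 1) * vp K) •
      (innerSL ℝ (bary (polarBody K))).coprod (innerSL ℝ (bary K))) (0, 0) := by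
  have hcomp := isCompact_polarBody hK0
  have hleft := (hasFDerivAt_setIntegral_inv_one_add_inner_pow (μ := volume) hKcomp (n + 1)).comp
    (0 : EuclideanSpace ℝ (Fin n) × EuclideanSpace ℝ (Fin n)) (f := Prod.snd) hasFDerivAt_snd
  have hright := hasFDerivAt_setIntegral_inv_one_add_inner_add_pow (μ := volume) hcomp (n + 1)
  refine ((hleft.mul hright).congr_of_eventuallyEq
    (eventually_FK_eq_setIntegral_mul_setIntegral hKcomp hKconv hK0)).congr_fderiv ?_
  rw [← toReal_volume_smul_bary hKcomp.measure_ne_top,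
    ← toReal_volume_smul_bary hcomp.measure_ne_top]
  ext v <;> simp [vp, Measure.real] <;> ring

end VolumeProduct

theorem stmt1 {n : ℕ} (hn : 1 ≤ n) (K : Set (EuclideanSpace ℝ (Fin n)))
    (hKcomp : IsCompact K) (hKconv : Convex ℝ K)
    (hK0 : (0 : EuclideanSpace ℝ (Fin n)) ∈ interior K) :
    ∃ L : EuclideanSpace ℝ (Fin n) × EuclideanSpace ℝ (Fin n) →L[ℝ] ℝ,
      HasFDerivAt (FK K) L (0, 0) ∧
      ∀ v η : EuclideanSpace ℝ (Fin n),
        L (v, η) = -((n : ℝ) + 1) * vp K * (⟪bary (polarBody K), v⟫ + ⟪bary K, η⟫) := by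
  refine ⟨_, hasFDerivAt_FK hKcomp hKconv hK0, fun v η => ?_⟩
  simp only [smul_apply, ContinuousLinearMap.coprod_apply, innerSL_apply_apply, smul_eq_mul]
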